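/- Let H be a cohomology theory on C^□ with values in an abelian category A. Let f : X → X' be a morphism in C, let Φ be a good M-filtration of dimensional type d of X and Ψ a good M-filtration of dimensional type d' of X', and assume f is compatible with the filtrations, i.e., for every p it induces morphisms of pairs (Φ_p, Φ_{p−1}) → (Ψ_p, Ψ_{p−1}) (with the convention that Ψ_p = X' for p ≥ d' and Φ_p = X for p ≥ d). Then: (i) the maps H^p(Ψ_p, Ψ_{p−1}) → H^p(Φ_p, Φ_{p−1}) induced by f commute with the differentials and define a morphism of cochain complexes ^ΨC^*(X') → ^ΦC^*(X); and (ii) for every p the induced map on p-th cohomology objects corresponds to f^* : H^p(X') → H^p(X) under the canonical isomorphisms θ^p_Φ : H^p(^ΦC^*(X)) ≅ H^p(X) and θ^p_Ψ : H^p(^ΨC^*(X')) ≅ H^p(X') of the degeneration theorem, i.e., f^* ∘ θ^p_Ψ = θ^p_Φ ∘ H^p(f). -/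

import Mathlib

/-!
The levelwise maps `g p` form morphisms of pairs and of triples, so the induced maps on
`H^p(X_p, X_{p-1})` commute with the differentials by functoriality and by naturality of the
connecting morphism (`diff_stepMap`).

For the comparison with `f^*` in degree `p`, the point is that the restriction
`H^p(X) ⟶ H^p(X_p)` is monic (`mono_resTop`): it factors through the restrictions
`H^p(X_q) ⟶ H^p(X_{q-1})` with `p < q ≤ d`, whose kernels are quotients of
`H^p(X_q, X_{q-1}) = 0`. Since `homologyπ` is epic, the identity may be checked after
precomposing with `homologyπ` and postcomposing with this restriction
(`comparison_of_cycles`). There the characterisation of the two `θ` turns both sides into maps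
from the cycles `Z^p ⊆ H^p(Ψ_p, Ψ_{p-1})` to `H^p(Φ_p)`, which agree by functoriality of `H^p`,
because `f` restricts to `g p` on `Φ_p` (`inclLE_comp`). The latter follows from the compatibility of `f`
and `g` at level `max d d'`, as the inclusions of `Ψ` are monic.
-/

open CategoryTheory CategoryTheory.Limits

universe v u v' u'

/-- The data of a subcategory `M` of distinguished monomorphisms of `C` (saturated, containing
all isomorphisms, closed under composition), together with a strict initial object `∅` such
that `∅ ⟶ X` is distinguished for every `X`. -/
structure MData (C : Type u) [Category.{v} C] where
  mem : ∀ ⦃Y X : C⦄, (Y ⟶ X) → Prop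
  mono_of_mem : ∀ ⦃Y X : C⦄ (f : Y ⟶ X), mem f → Mono f
  mem_of_isIso : ∀ ⦃Y X : C⦄ (f : Y ⟶ X), IsIso f → mem f
  mem_comp : ∀ ⦃Z Y X : C⦄ (g : Z ⟶ Y) (f : Y ⟶ X), mem g → mem f → mem (g ≫ f)
  saturated : ∀ ⦃Z Y X : C⦄ (g : Z ⟶ Y) (f : Y ⟶ X), mem f → mem (g ≫ f) → mem g
  empty : C
  isInitialEmpty : IsInitial empty
  strictInitial : ∀ ⦃X : C⦄ (f : X ⟶ empty), IsIso f
  mem_emptyTo : ∀ X : C, mem (isInitialEmpty.to X)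

variable {C : Type u} [Category.{v} C]

/-- An object of the category of pairs `C^□`: a distinguished monomorphism `Y ↪ X` in `M`. -/
structure MPair (M : MData C) where
  X : C
  Y : C
  i : Y ⟶ X
  mem : M.mem i

/-- The pair `(X, ∅)`, written `H^n(X) := H^n(X, ∅)`. -/
def MData.pairOf (M : MData C) (X : C) : MPair M :=
  ⟨X, M.empty, M.isInitialEmpty.to X, M.mem_emptyTo X⟩

/-- A triple `Z ⊆ Y ⊆ X` of composable distinguished monomorphisms. -/
structure MTriple (M : MData C) where
  X : C
  Y : C
  Z : C
  iYX : Y ⟶ X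
  iZY : Z ⟶ Y
  memYX : M.mem iYX
  memZY : M.mem iZY

/-- The pair `(X, Y)` of a triple. -/
def MTriple.pairXY {M : MData C} (T : MTriple M) : MPair M := ⟨T.X, T.Y, T.iYX, T.memYX⟩

/-- The pair `(Y, Z)` of a triple. -/
def MTriple.pairYZ {M : MData C} (T : MTriple M) : MPair M := ⟨T.Y, T.Z, T.iZY, T.memZY⟩

/-- The pair `(X, Z)` of a triple. -/
def MTriple.pairXZ {M : MData C} (T : MTriple M) : MPair M :=
  ⟨T.X, T.Z, T.iZY ≫ T.iYX, M.mem_comp _ _ T.memZY T.memYX⟩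

/-- A cohomology theory on `C^□` with values in an abelian category `A`:
a `ℤ`-indexed family of contravariant functors `H^n : (C^□)^op ⥤ A` together with connecting
morphisms `δ^n : H^n(Y,Z) ⟶ H^{n+1}(X,Y)` for every triple `Z ⊆ Y ⊆ X`, natural in the triple,
such that the long sequence
`⋯ → H^n(X,Y) → H^n(X,Z) → H^n(Y,Z) → H^{n+1}(X,Y) → ⋯` is exact. -/
structure CohomologyTheory (M : MData C) (A : Type u') [Category.{v'} A] [Abelian A] where
  H : ℤ → MPair M → A
  map : ∀ (n : ℤ) (P Q : MPair M) (fX : P.X ⟶ Q.X) (fY : P.Y ⟶ Q.Y),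
    P.i ≫ fX = fY ≫ Q.i → (H n Q ⟶ H n P)
  map_id : ∀ (n : ℤ) (P : MPair M) (h : P.i ≫ 𝟙 P.X = 𝟙 P.Y ≫ P.i),
    map n P P (𝟙 P.X) (𝟙 P.Y) h = 𝟙 (H n P)
  map_comp : ∀ (n : ℤ) (P Q R : MPair M) (fX : P.X ⟶ Q.X) (fY : P.Y ⟶ Q.Y)
    (hf : P.i ≫ fX = fY ≫ Q.i) (gX : Q.X ⟶ R.X) (gY : Q.Y ⟶ R.Y)
    (hg : Q.i ≫ gX = gY ≫ R.i) (hfg : P.i ≫ (fX ≫ gX) = (fY ≫ gY) ≫ R.i),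
    map n P R (fX ≫ gX) (fY ≫ gY) hfg = map n Q R gX gY hg ≫ map n P Q fX fY hf
  δ : ∀ (n : ℤ) (T : MTriple M), H n T.pairYZ ⟶ H (n + 1) T.pairXY
  δ_natural : ∀ (n : ℤ) (T T' : MTriple M) (fX : T.X ⟶ T'.X) (fY : T.Y ⟶ T'.Y)
    (fZ : T.Z ⟶ T'.Z) (hXY : T.iYX ≫ fX = fY ≫ T'.iYX) (hYZ : T.iZY ≫ fY = fZ ≫ T'.iZY),
    map n T.pairYZ T'.pairYZ fY fZ hYZ ≫ δ n T = δ n T' ≫ map (n + 1) T.pairXY T'.pairXY fX fY hXY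
  comp_res_res : ∀ (n : ℤ) (T : MTriple M)
    (h₁ : T.pairXZ.i ≫ 𝟙 T.X = T.iZY ≫ T.pairXY.i)
    (h₂ : T.pairYZ.i ≫ T.iYX = 𝟙 T.Z ≫ T.pairXZ.i),
    map n T.pairXZ T.pairXY (𝟙 T.X) T.iZY h₁ ≫ map n T.pairYZ T.pairXZ T.iYX (𝟙 T.Z) h₂ = 0
  exact_res_res : ∀ (n : ℤ) (T : MTriple M)
    (h₁ : T.pairXZ.i ≫ 𝟙 T.X = T.iZY ≫ T.pairXY.i)
    (h₂ : T.pairYZ.i ≫ T.iYX = 𝟙 T.Z ≫ T.pairXZ.i),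
    (ShortComplex.mk _ _ (comp_res_res n T h₁ h₂)).Exact
  comp_res_δ : ∀ (n : ℤ) (T : MTriple M)
    (h₂ : T.pairYZ.i ≫ T.iYX = 𝟙 T.Z ≫ T.pairXZ.i),
    map n T.pairYZ T.pairXZ T.iYX (𝟙 T.Z) h₂ ≫ δ n T = 0
  exact_res_δ : ∀ (n : ℤ) (T : MTriple M)
    (h₂ : T.pairYZ.i ≫ T.iYX = 𝟙 T.Z ≫ T.pairXZ.i),
    (ShortComplex.mk _ _ (comp_res_δ n T h₂)).Exact
  comp_δ_res : ∀ (n : ℤ) (T : MTriple M)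
    (h₁ : T.pairXZ.i ≫ 𝟙 T.X = T.iZY ≫ T.pairXY.i),
    δ n T ≫ map (n + 1) T.pairXZ T.pairXY (𝟙 T.X) T.iZY h₁ = 0
  exact_δ_res : ∀ (n : ℤ) (T : MTriple M)
    (h₁ : T.pairXZ.i ≫ 𝟙 T.X = T.iZY ≫ T.pairXY.i),
    (ShortComplex.mk _ _ (comp_δ_res n T h₁)).Exact

variable {A : Type u'} [Category.{v'} A] [Abelian A]

/-- An `M`-filtration of dimensional type `d` :
`∅ = X_{-1} ⊆ X_0 ⊆ ⋯ ⊆ X_d = X`, extended constantly outside `[-1, d]`. -/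
structure MFiltration (M : MData C) (d : ℤ) where
  obj : ℤ → C
  ι : ∀ p : ℤ, obj (p - 1) ⟶ obj p
  mem_ι : ∀ p : ℤ, M.mem (ι p)
  isInitialBot : ∀ p : ℤ, p ≤ -1 → IsInitial (obj p)
  isIsoTop : ∀ p : ℤ, d + 1 ≤ p → IsIso (ι p)

namespace MFiltration

variable {M : MData C} {d : ℤ}

/-- The pair `(X_p, X_{p-1})` of a filtration. -/
def pairStep (Φ : MFiltration M d) (p : ℤ) : MPair M :=
  ⟨Φ.obj p, Φ.obj (p - 1), Φ.ι p, Φ.mem_ι p⟩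

/-- The triple `∅ ⊆ X_{q-1} ⊆ X_q` of a filtration. -/
def tripleAt (Φ : MFiltration M d) (q : ℤ) : MTriple M :=
  ⟨Φ.obj q, Φ.obj (q - 1), M.empty, Φ.ι q, M.isInitialEmpty.to _, Φ.mem_ι q, M.mem_emptyTo _⟩

/-- The functoriality map `H^n(X_p, X_{p-1}) ⟶ H^n(X_p) = H^n(X_p, ∅)`. -/
def resStep (Φ : MFiltration M d) (HT : CohomologyTheory M A) (n p : ℤ) :
    HT.H n (Φ.pairStep p) ⟶ HT.H n (M.pairOf (Φ.obj p)) :=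
  HT.map n (M.pairOf (Φ.obj p)) (Φ.pairStep p) (𝟙 (Φ.obj p))
    (M.isInitialEmpty.to (Φ.obj (p - 1))) (M.isInitialEmpty.hom_ext _ _)

/-- The differential `d^p : H^p(X_p, X_{p-1}) ⟶ H^{p+1}(X_{p+1}, X_p)` of the coniveau
complex: the composite of the functoriality map `H^p(X_p, X_{p-1}) → H^p(X_p)` with the
connecting morphism `δ^p : H^p(X_p) → H^{p+1}(X_{p+1}, X_p)` of the triple
`∅ ⊆ X_p ⊆ X_{p+1}`. -/
def diff (Φ : MFiltration M d) (HT : CohomologyTheory M A) (p : ℤ) :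
    HT.H p (Φ.pairStep p) ⟶ HT.H (p + 1) (Φ.pairStep (p + 1)) :=
  Φ.resStep HT p p ≫
    eqToHom (congrArg (fun q => HT.H p (M.pairOf (Φ.obj q))) (by omega : p = p + 1 - 1)) ≫
    HT.δ p (Φ.tripleAt (p + 1))

/-- A filtration is good if `H^m(X_p, X_{p-1}) = 0` for all `m ≠ p` and `0 ≤ p ≤ d`. -/
def IsGood (Φ : MFiltration M d) (HT : CohomologyTheory M A) : Prop :=
  ∀ p m : ℤ, 0 ≤ p → p ≤ d → m ≠ p → IsZero (HT.H m (Φ.pairStep p))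

/-- The coniveau complex `C^*(X)` with `C^p(X) = H^p(X_p, X_{p-1})`. -/
def coniveau (Φ : MFiltration M d) (HT : CohomologyTheory M A)
    (hdd : ∀ p : ℤ, Φ.diff HT p ≫ Φ.diff HT (p + 1) = 0) : CochainComplex A ℤ :=
  CochainComplex.of (fun p => HT.H p (Φ.pairStep p)) (fun p => Φ.diff HT p) hdd

/-- One step inclusion `X_p ⟶ X_{p+1}`. -/
def inclStep (Φ : MFiltration M d) (p : ℤ) : Φ.obj p ⟶ Φ.obj (p + 1) :=
  eqToHom (by rw [add_sub_cancel_right]) ≫ Φ.ι (p + 1)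

/-- The inclusion `X_p ⟶ X_{p+n}`. -/
def inclAux (Φ : MFiltration M d) (p : ℤ) : (n : ℕ) → (Φ.obj p ⟶ Φ.obj (p + n))
  | 0 => eqToHom (by norm_num)
  | (n + 1) => Φ.inclAux p n ≫ Φ.inclStep (p + n) ≫ eqToHom (congrArg Φ.obj (by push_cast; ring))

/-- The inclusion `X_p ⟶ X_q` for `p ≤ q`. -/
def inclLE (Φ : MFiltration M d) (p q : ℤ) (h : p ≤ q) : Φ.obj p ⟶ Φ.obj q :=
  Φ.inclAux p (q - p).toNat ≫ eqToHom (congrArg Φ.obj (by omega))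

/-- The restriction `H^n(X) ⟶ H^n(X_p)` induced by the inclusion `X_p ⊆ X_d = X`. -/
def resTop (Φ : MFiltration M d) (HT : CohomologyTheory M A) (n p : ℤ) (h : p ≤ d) :
    HT.H n (M.pairOf (Φ.obj d)) ⟶ HT.H n (M.pairOf (Φ.obj p)) :=
  HT.map n (M.pairOf (Φ.obj p)) (M.pairOf (Φ.obj d)) (Φ.inclLE p d h) (𝟙 M.empty)
    (M.isInitialEmpty.hom_ext _ _)

/-- The map `H^n(Ψ_p, Ψ_{p-1}) ⟶ H^n(Φ_p, Φ_{p-1})` induced by a levelwise morphism of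
filtrations. -/
def stepMap {d' : ℤ} (Φ : MFiltration M d) (Ψ : MFiltration M d')
    (HT : CohomologyTheory M A) (g : ∀ p : ℤ, Φ.obj p ⟶ Ψ.obj p)
    (hg : ∀ p : ℤ, Φ.ι p ≫ g p = g (p - 1) ≫ Ψ.ι p) (n p : ℤ) :
    HT.H n (Ψ.pairStep p) ⟶ HT.H n (Φ.pairStep p) :=
  HT.map n (Φ.pairStep p) (Ψ.pairStep p) (g p) (g (p - 1)) (hg p)

end MFiltration

/-! ### Absolute cohomology of a cohomology theory -/

namespace CohomologyTheory

variable {M : MData C} (HT : CohomologyTheory M A)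

lemma map_comp' (n : ℤ) {P Q R : MPair M} {fX : P.X ⟶ Q.X} {fY : P.Y ⟶ Q.Y}
    (hf : P.i ≫ fX = fY ≫ Q.i) {gX : Q.X ⟶ R.X} {gY : Q.Y ⟶ R.Y}
    (hg : Q.i ≫ gX = gY ≫ R.i) :
    HT.map n Q R gX gY hg ≫ HT.map n P Q fX fY hf =
      HT.map n P R (fX ≫ gX) (fY ≫ gY)
        (by rw [← Category.assoc, hf, Category.assoc, hg, Category.assoc]) :=
  (HT.map_comp ..).symm

lemma map_congr (n : ℤ) {P Q : MPair M} {fX fX' : P.X ⟶ Q.X} {fY fY' : P.Y ⟶ Q.Y}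
    (hX : fX = fX') (hY : fY = fY') (h : P.i ≫ fX = fY ≫ Q.i) :
    HT.map n P Q fX fY h = HT.map n P Q fX' fY' (by rw [← hX, ← hY, h]) := by
  subst hX hY; rfl

/-- The map `f^* : H^n(X') ⟶ H^n(X)` on absolute cohomology. -/
abbrev pull (n : ℤ) {X X' : C} (f : X ⟶ X') :
    HT.H n (M.pairOf X') ⟶ HT.H n (M.pairOf X) :=
  HT.map n (M.pairOf X) (M.pairOf X') f (𝟙 M.empty) (M.isInitialEmpty.hom_ext _ _)

lemma pull_id (n : ℤ) (X : C) : HT.pull n (𝟙 X) = 𝟙 _ := HT.map_id n (M.pairOf X) _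

lemma pull_comp (n : ℤ) {X Y Z : C} (f : X ⟶ Y) (g : Y ⟶ Z) :
    HT.pull n (f ≫ g) = HT.pull n g ≫ HT.pull n f := by
  refine Eq.trans ?_ (HT.map_comp' n _ _).symm
  exact HT.map_congr n rfl (M.isInitialEmpty.hom_ext _ _) _

/-- Exactness of the sequence of the triple `∅ ⊆ Y ⊆ X`: the kernel of `H^n(X) ⟶ H^n(Y)` is a
quotient of `H^n(X, Y)`. -/
lemma mono_pull (n : ℤ) {X Y : C} (i : Y ⟶ X) (hi : M.mem i)
    (h0 : IsZero (HT.H n ⟨X, Y, i, hi⟩)) : Mono (HT.pull n i) := by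
  let T : MTriple M := ⟨X, Y, M.empty, i, M.isInitialEmpty.to Y, hi, M.mem_emptyTo Y⟩
  have hT : T.pairXZ.i = M.isInitialEmpty.to X := M.isInitialEmpty.hom_ext _ _
  have hm : Mono (HT.map n T.pairYZ T.pairXZ i (𝟙 M.empty) (M.isInitialEmpty.hom_ext _ _)) :=
    (HT.exact_res_res n T (M.isInitialEmpty.hom_ext _ _)
      (M.isInitialEmpty.hom_ext _ _)).mono_g (h0.eq_of_src _ _)
  -- `T.pairXZ` and `M.pairOf X` have propositionally equal structure maps, so identities of
  -- `X` and `∅` give inverse isomorphisms between them.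
  let a := HT.map n T.pairXZ (M.pairOf X) (𝟙 X) (𝟙 M.empty) (M.isInitialEmpty.hom_ext _ _)
  let b := HT.map n (M.pairOf X) T.pairXZ (𝟙 X) (𝟙 M.empty) (M.isInitialEmpty.hom_ext _ _)
  have hab : a ≫ b = 𝟙 _ := by
    refine (HT.map_comp' n _ _).trans (Eq.trans ?_ (HT.pull_id n X))
    exact HT.map_congr n (Category.comp_id _) (Category.comp_id _) _
  have ha : Mono a := mono_of_mono_fac hab
  have hfac : HT.pull n i = a ≫
      HT.map n T.pairYZ T.pairXZ i (𝟙 M.empty) (M.isInitialEmpty.hom_ext _ _) := by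
    refine Eq.trans ?_ (HT.map_comp' n _ _).symm
    exact HT.map_congr n (Category.comp_id _).symm (Category.comp_id _).symm _
  rw [hfac]
  exact @mono_comp _ _ _ _ _ a ha _ hm

end CohomologyTheory

/-! ### Inclusions and restrictions along a filtration -/

namespace MFiltration

variable {M : MData C} {d : ℤ} (Φ : MFiltration M d)

lemma inclLE_self (p : ℤ) : Φ.inclLE p p le_rfl = 𝟙 _ := by
  have h : ∀ (n : ℕ) (hn : n = 0) (h : Φ.obj (p + n) = Φ.obj p),
      Φ.inclAux p n ≫ eqToHom h = 𝟙 _ := by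
    rintro _ rfl h
    simp [inclAux]
  exact h _ (by simp) _

lemma inclLE_succ (p q : ℤ) (h : p ≤ q) :
    Φ.inclLE p (q + 1) (by omega) = Φ.inclLE p q h ≫ Φ.inclStep q := by
  have key : ∀ (m n : ℕ) (hm : m = n + 1) (q : ℤ) (hq : p + n = q)
      (h₁ : Φ.obj (p + m) = Φ.obj (q + 1)) (h₂ : Φ.obj (p + n) = Φ.obj q),
      Φ.inclAux p m ≫ eqToHom h₁ = (Φ.inclAux p n ≫ eqToHom h₂) ≫ Φ.inclStep q := by
    rintro _ n rfl _ rfl h₁ h₂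
    simp [inclAux]
  exact key _ _ (by omega) _ (by omega) _ _

lemma inclLE_trans (p q r : ℤ) (h : p ≤ q) (h' : q ≤ r) :
    Φ.inclLE p q h ≫ Φ.inclLE q r h' = Φ.inclLE p r (h.trans h') := by
  induction r, h' using Int.leInduction with
  | base => rw [inclLE_self, Category.comp_id]
  | succ r hr ih => rw [inclLE_succ _ _ _ hr, inclLE_succ _ _ _ (h.trans hr), ← ih, Category.assoc]

lemma mem_inclStep (q : ℤ) : M.mem (Φ.inclStep q) :=
  M.mem_comp _ _ (M.mem_of_isIso _ inferInstance) (Φ.mem_ι _)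

lemma mono_inclLE (p q : ℤ) (h : p ≤ q) : Mono (Φ.inclLE p q h) := by
  induction q, h using Int.leInduction with
  | base => rw [inclLE_self]; infer_instance
  | succ q hq ih =>
    have := M.mono_of_mem _ (Φ.mem_inclStep q)
    rw [inclLE_succ _ _ _ hq]
    exact mono_comp _ _

variable (HT : CohomologyTheory M A)

lemma mono_pull_inclStep (hΦ : Φ.IsGood HT) (n q : ℤ) (hq0 : 0 ≤ q + 1) (hq : q + 1 ≤ d)
    (hn : n ≠ q + 1) : Mono (HT.pull n (Φ.inclStep q)) := by
  have h1 := HT.mono_pull n (Φ.ι (q + 1)) (Φ.mem_ι _) (hΦ (q + 1) n hq0 hq hn)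
  have h2 : IsIso (HT.pull n (eqToHom (by rw [add_sub_cancel_right]) :
      Φ.obj q ⟶ Φ.obj (q + 1 - 1))) := by
    have : ∀ {X Y : C} (e : X = Y), IsIso (HT.pull n (eqToHom e)) := by
      rintro X _ rfl
      rw [eqToHom_refl, HT.pull_id]
      infer_instance
    exact this _
  rw [inclStep, HT.pull_comp]
  exact mono_comp _ _

lemma mono_pull_inclLE (hΦ : Φ.IsGood HT) (p q : ℤ) (hp : 0 ≤ p) (h : p ≤ q) (hq : q ≤ d) :
    Mono (HT.pull p (Φ.inclLE p q h)) := by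
  induction q, h using Int.leInduction with
  | base => rw [inclLE_self, HT.pull_id]; infer_instance
  | succ q hpq ih =>
    have := ih (by omega)
    have := Φ.mono_pull_inclStep HT hΦ p q (by omega) hq (by omega)
    rw [inclLE_succ _ _ _ hpq, HT.pull_comp]
    exact mono_comp _ _

lemma mono_resTop (hΦ : Φ.IsGood HT) (p : ℤ) (hp : 0 ≤ p) (h : p ≤ d) :
    Mono (Φ.resTop HT p p h) :=
  Φ.mono_pull_inclLE HT hΦ p d hp h le_rfl

/-! ### Morphisms of filtrations -/

variable {d' : ℤ} (Ψ : MFiltration M d') (g : ∀ p : ℤ, Φ.obj p ⟶ Ψ.obj p)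

lemma inclLE_naturality (hg : ∀ p : ℤ, Φ.ι p ≫ g p = g (p - 1) ≫ Ψ.ι p) (p q : ℤ) (h : p ≤ q) :
    Φ.inclLE p q h ≫ g q = g p ≫ Ψ.inclLE p q h := by
  have hstep (q : ℤ) : Φ.inclStep q ≫ g (q + 1) = g q ≫ Ψ.inclStep q := by
    have : ∀ r (h : q = r), eqToHom (congrArg Φ.obj h) ≫ g r =
        g q ≫ eqToHom (congrArg Ψ.obj h) := by
      rintro _ rfl; simp
    rw [inclStep, inclStep, Category.assoc, hg, ← Category.assoc, this _ (by omega),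
      Category.assoc]
  induction q, h using Int.leInduction with
  | base => simp [inclLE_self]
  | succ q hq ih =>
    rw [inclLE_succ _ _ _ hq, inclLE_succ _ _ _ hq, Category.assoc, hstep, ← Category.assoc, ih,
      Category.assoc]

/-- Compatibility of `f` and `g` at level `max d d'` descends to every lower level. -/
lemma inclLE_comp (hg : ∀ p : ℤ, Φ.ι p ≫ g p = g (p - 1) ≫ Ψ.ι p)
    (f : Φ.obj d ⟶ Ψ.obj d')
    (hf : Φ.inclLE d (max d d') (le_max_left d d') ≫ g (max d d') =
        f ≫ Ψ.inclLE d' (max d d') (le_max_right d d'))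
    (p : ℤ) (hp : p ≤ d) (hp' : p ≤ d') :
    Φ.inclLE p d hp ≫ f = g p ≫ Ψ.inclLE p d' hp' := by
  have := Ψ.mono_inclLE d' (max d d') (le_max_right d d')
  rw [← cancel_mono (Ψ.inclLE d' (max d d') (le_max_right d d')), Category.assoc, Category.assoc,
    ← hf, inclLE_trans, ← Category.assoc, inclLE_trans]
  exact inclLE_naturality Φ Ψ g hg p _ _

variable (hg : ∀ p : ℤ, Φ.ι p ≫ g p = g (p - 1) ≫ Ψ.ι p)

lemma resStep_pull (n p : ℤ) :
    Ψ.resStep HT n p ≫ HT.pull n (g p) = Φ.stepMap Ψ HT g hg n p ≫ Φ.resStep HT n p := by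
  refine (HT.map_comp' n _ _).trans (Eq.trans ?_ (HT.map_comp' n _ _).symm)
  exact HT.map_congr n ((Category.comp_id _).trans (Category.id_comp _).symm)
    (M.isInitialEmpty.hom_ext _ _) _

/-- The connecting morphism `H^p(X_{q-1}) ⟶ H^{p+1}(X_q, X_{q-1})`, with source and target
expressed through `pairOf` and `pairStep`. -/
abbrev deltaAt (p q : ℤ) :
    HT.H p (M.pairOf (Φ.obj (q - 1))) ⟶ HT.H (p + 1) (Φ.pairStep q) :=
  HT.δ p (Φ.tripleAt q)

lemma diff_eq (p : ℤ) :
    Φ.diff HT p = Φ.resStep HT p p ≫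
      eqToHom (congrArg (fun q => HT.H p (M.pairOf (Φ.obj q))) (by omega : p = p + 1 - 1)) ≫
      Φ.deltaAt HT p (p + 1) := rfl

lemma pull_deltaAt (p q : ℤ) :
    HT.pull p (g (q - 1)) ≫ Φ.deltaAt HT p q =
      Ψ.deltaAt HT p q ≫ Φ.stepMap Ψ HT g hg (p + 1) q :=
  HT.δ_natural p (Φ.tripleAt q) (Ψ.tripleAt q) (g q) (g (q - 1))
    (𝟙 M.empty) (hg q) (M.isInitialEmpty.hom_ext _ _)

lemma diff_stepMap (p : ℤ) :
    Φ.stepMap Ψ HT g hg p p ≫ Φ.diff HT p =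
      Ψ.diff HT p ≫ Φ.stepMap Ψ HT g hg (p + 1) (p + 1) := by
  have hcast : ∀ r (h : p = r),
      HT.pull p (g p) ≫ eqToHom (congrArg (fun q => HT.H p (M.pairOf (Φ.obj q))) h) =
      eqToHom (congrArg (fun q => HT.H p (M.pairOf (Ψ.obj q))) h) ≫ HT.pull p (g r) := by
    rintro _ rfl; simp
  rw [diff_eq, diff_eq, ← Category.assoc, ← resStep_pull, Category.assoc,
    ← Category.assoc (HT.pull p (g p)), hcast _ (by omega)]
  simp only [Category.assoc, pull_deltaAt Φ HT Ψ g hg]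

lemma coniveau_d (hdd : ∀ p : ℤ, Φ.diff HT p ≫ Φ.diff HT (p + 1) = 0) (i : ℤ) :
    (Φ.coniveau HT hdd).d i (i + 1) = Φ.diff HT i :=
  CochainComplex.of_d (fun p => HT.H p (Φ.pairStep p)) (fun p => Φ.diff HT p) i

end MFiltration

/-- The diagram chase behind the comparison: the primed objects belong to `Ψ`, the unprimed ones
to `Φ`. In order, the letters `Z`, `B`, `S`, `X`, `K` stand for cycles, homology of the complex,
the term of the complex, and the cohomology of the whole space and of its `p`-th step. -/
lemma comparison_of_cycles {D : Type*} [Category D]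
    {Z Z' B B' S S' X X' K K' : D}
    {π : Z ⟶ B} {π' : Z' ⟶ B'} {i : Z ⟶ S} {i' : Z' ⟶ S'} {θ : B ⟶ X} {θ' : B' ⟶ X'}
    {r : X ⟶ K} {r' : X' ⟶ K'} {s : S ⟶ K} {s' : S' ⟶ K'}
    {z : Z' ⟶ Z} {w : B' ⟶ B} {m : S' ⟶ S} {u : X' ⟶ X} {k : K' ⟶ K} [Epi π'] [Mono r]
    (hθ : π ≫ θ ≫ r = i ≫ s) (hθ' : π' ≫ θ' ≫ r' = i' ≫ s')
    (hw : π' ≫ w = z ≫ π) (hz : z ≫ i = i' ≫ m) (hs : s' ≫ k = m ≫ s)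
    (hu : u ≫ r = r' ≫ k) : θ' ≫ u = w ≫ θ := by
  rw [← cancel_mono r, ← cancel_epi π']
  calc π' ≫ (θ' ≫ u) ≫ r = (π' ≫ θ' ≫ r') ≫ k := by simp only [Category.assoc, hu]
    _ = (z ≫ i) ≫ s := by rw [hθ', hz, Category.assoc, hs, Category.assoc]
    _ = (π' ≫ w) ≫ θ ≫ r := by rw [hw, Category.assoc, Category.assoc, hθ]
    _ = π' ≫ (w ≫ θ) ≫ r := by simp only [Category.assoc]

/-- Let `f : X ⟶ X'` be a morphism of `C`, `Φ` a good `M`-filtration of `X`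
of type `d` and `Ψ` a good `M`-filtration of `X'` of type `d'`, and assume `f` is compatible
with the filtrations, via morphisms of pairs `(Φ_p, Φ_{p-1}) ⟶ (Ψ_p, Ψ_{p-1})` (with the
convention that the filtrations are constant above their top degree).  Then:
(i) the induced maps `H^p(Ψ_p, Ψ_{p-1}) ⟶ H^p(Φ_p, Φ_{p-1})` commute with the differentials
and define a morphism of cochain complexes `^ΨC^*(X') ⟶ ^ΦC^*(X)`; and
(ii) for every `p` the induced map on `p`-th cohomology objects corresponds to
`f^* : H^p(X') → H^p(X)` under the canonical isomorphisms `θ^p_Φ`, `θ^p_Ψ` of the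
degeneration theorem: `f^* ∘ θ^p_Ψ = θ^p_Φ ∘ H^p(f)`. -/
theorem coniveau_functoriality {C : Type u} [Category.{v} C] {M : MData C}
    {A : Type u'} [Category.{v'} A] [Abelian A] (HT : CohomologyTheory M A)
    {d d' : ℤ} (Φ : MFiltration M d) (Ψ : MFiltration M d')
    (hΦ : Φ.IsGood HT) (hΨ : Ψ.IsGood HT)
    (f : Φ.obj d ⟶ Ψ.obj d')
    (g : ∀ p : ℤ, Φ.obj p ⟶ Ψ.obj p)
    (hg : ∀ p : ℤ, Φ.ι p ≫ g p = g (p - 1) ≫ Ψ.ι p)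
    (hf : Φ.inclLE d (max d d') (le_max_left d d') ≫ g (max d d') =
        f ≫ Ψ.inclLE d' (max d d') (le_max_right d d'))
    (hddΦ : ∀ p : ℤ, Φ.diff HT p ≫ Φ.diff HT (p + 1) = 0)
    (hddΨ : ∀ p : ℤ, Ψ.diff HT p ≫ Ψ.diff HT (p + 1) = 0) :
    ∃ ψ : Ψ.coniveau HT hddΨ ⟶ Φ.coniveau HT hddΦ,
      (∀ p : ℤ, ψ.f p = Φ.stepMap Ψ HT g hg p p) ∧
      ∀ (p : ℤ) (hp0 : 0 ≤ p) (hpd : p ≤ d) (hpd' : p ≤ d')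
        (θΦ : (Φ.coniveau HT hddΦ).homology p ⟶ HT.H p (M.pairOf (Φ.obj d)))
        (θΨ : (Ψ.coniveau HT hddΨ).homology p ⟶ HT.H p (M.pairOf (Ψ.obj d'))),
        IsIso θΦ → IsIso θΨ →
        ((Φ.coniveau HT hddΦ).homologyπ p ≫ θΦ ≫ Φ.resTop HT p p hpd =
          (Φ.coniveau HT hddΦ).iCycles p ≫ Φ.resStep HT p p) →
        ((Ψ.coniveau HT hddΨ).homologyπ p ≫ θΨ ≫ Ψ.resTop HT p p hpd' =
          (Ψ.coniveau HT hddΨ).iCycles p ≫ Ψ.resStep HT p p) →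
        θΨ ≫ HT.map p (M.pairOf (Φ.obj d)) (M.pairOf (Ψ.obj d')) f (𝟙 M.empty)
            (M.isInitialEmpty.hom_ext _ _) =
          HomologicalComplex.homologyMap ψ p ≫ θΦ := by
  let ψ : Ψ.coniveau HT hddΨ ⟶ Φ.coniveau HT hddΦ :=
    { f := fun p => Φ.stepMap Ψ HT g hg p p
      comm' := by
        rintro i _ rfl
        rw [MFiltration.coniveau_d, MFiltration.coniveau_d]
        exact Φ.diff_stepMap HT Ψ g hg i }
  refine ⟨ψ, fun _ => rfl, fun p hp0 hpd hpd' θΦ θΨ _ _ hθΦ hθΨ => ?_⟩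
  have := Φ.mono_resTop HT hΦ p hp0 hpd
  have hres : HT.pull p f ≫ Φ.resTop HT p p hpd = Ψ.resTop HT p p hpd' ≫ HT.pull p (g p) := by
    have := congrArg (HT.pull p) (Φ.inclLE_comp Ψ g hg f hf p hpd hpd')
    rwa [HT.pull_comp, HT.pull_comp] at this
  exact comparison_of_cycles hθΦ hθΨ (HomologicalComplex.homologyπ_naturality ψ p)
    (HomologicalComplex.cyclesMap_i ψ p) (Φ.resStep_pull HT Ψ g hg p p) hres
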